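/- arXiv:2510.16825 — 3 statements merged into one kernel-verified Lean document; each statement's English description precedes it below -/
import Mathlib

section
/- Let F be an arbitrary field, m ≥ 1, and let f ∈ F⟨X_1,…,X_m⟩ be a nonzero multilinear polynomial. Then f is (m−1)-rich. -/
/-- `f` is `m'`-rich: for every `n ≥ m'` and all `β₁, …, β_{n-m'} ∈ F` there exist
`A₁, …, A_m ∈ Mₙ(F)` such that `f(A₁,…,A_m)` is diagonal with `(i,i)` entry `βᵢ`
for `1 ≤ i ≤ n - m'`. -/
def IsRich (F : Type) [Field F] (m : ℕ) (f : FreeAlgebra F (Fin m)) (m' : ℕ) : Prop :=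
  ∀ n : ℕ, m' ≤ n → ∀ β : Fin (n - m') → F,
    ∃ A : Fin m → Matrix (Fin n) (Fin n) F,
      (FreeAlgebra.lift F A f : Matrix (Fin n) (Fin n) F).IsDiag ∧
      ∀ i : Fin (n - m'),
        (FreeAlgebra.lift F A f : Matrix (Fin n) (Fin n) F)
          (Fin.castLE (Nat.sub_le n m') i) (Fin.castLE (Nat.sub_le n m') i) = β i

/-- `f` is multilinear: `f = Σ_{σ ∈ Sym(m)} α_σ X_{σ(1)} ⋯ X_{σ(m)}`. -/
def IsMultilinearPoly (F : Type) [Field F] (m : ℕ) (f : FreeAlgebra F (Fin m)) : Prop :=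
  ∃ α : Equiv.Perm (Fin m) → F,
    f = ∑ σ : Equiv.Perm (Fin m),
      α σ • (List.ofFn fun t : Fin m => FreeAlgebra.ι F (σ t)).prod

/-!
Fix a letter `b` that begins some monomial of `f`, and write `∂_b f` for the sum of the tails of
the monomials beginning with `b`. Substitute for every other letter a matrix supported on the first
subdiagonal and for `b` the `(m - 1)`-st superdiagonal matrix with entries `x_p`. Each monomial
contains `b` once, hence evaluates to a diagonal matrix. In a monomial `u b z`, the `p`-th row of
the factor `u` lives in column `p - |u|`, so the `p`-th diagonal entry of `f` involves only `x_r`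
with `r ≤ p`, and `x_p` enters linearly, its coefficient being an entry of the value of `∂_b f`. If
these coefficients are nonzero, the `x_p` can be found recursively for prescribed diagonal entries.

That a nonzero polynomial takes a value with nonzero entries on suitable subdiagonal matrices is the
same argument, by induction on the degree: the letter `b` is now given a subdiagonal matrix with
entries `x_p` as well, and the prescribed entries are all `1`.
-/

theorem exists_forall_eq_apply_of_dependsOn_Iio {ι β : Type*} [Preorder ι] [WellFoundedLT ι]
    [Nonempty β] (G : ι → (ι → β) → β) (hG : ∀ p, DependsOn (G p) (Set.Iio p)) :
    ∃ y : ι → β, ∀ p, y p = G p y := by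
  classical
  let step (p : ι) (ih : ∀ r, r < p → β) : β :=
    G p fun r => if h : r < p then ih r h else Classical.arbitrary β
  refine ⟨wellFounded_lt.fix step, fun p => ?_⟩
  rw [WellFounded.fix_eq]
  exact hG p fun r hr => dif_pos hr

section Diagonals

variable {F : Type*} [Semiring F] {n : ℕ}

variable (F n) in
/-- The matrices supported on the `d`-th diagonal, with `d > 0` above and `d < 0` below the main
diagonal; these form a grading of the matrix algebra by `ℤ`. -/
def diagonalSubmodule (d : ℤ) : Submodule F (Matrix (Fin n) (Fin n) F) where
  carrier := {M | ∀ p q : Fin n, (q : ℤ) ≠ p + d → M p q = 0}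
  zero_mem' _ _ _ := rfl
  add_mem' hM hN p q h := by rw [Matrix.add_apply, hM p q h, hN p q h, add_zero]
  smul_mem' c M hM p q h := by rw [Matrix.smul_apply, hM p q h, smul_zero]

instance instGradedMonoidDiagonalSubmodule : SetLike.GradedMonoid (diagonalSubmodule F n) where
  one_mem p q h := Matrix.one_apply_ne fun hpq => h (by rw [hpq, add_zero])
  mul_mem d e M N hM hN p q h := by
    rw [Matrix.mul_apply]
    refine Finset.sum_eq_zero fun r _ => ?_
    by_cases hr : (r : ℤ) = p + d
    · rw [hN r q (by rwa [hr, add_assoc]), mul_zero]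
    · rw [hM p r hr, zero_mul]

theorem isDiag_of_mem_diagonalSubmodule_zero {M : Matrix (Fin n) (Fin n) F}
    (hM : M ∈ diagonalSubmodule F n 0) : M.IsDiag :=
  fun p q hpq => hM p q fun h => hpq (Fin.ext (by omega))

variable (F n) in
/-- The matrix with entries `1` on the `d`-th diagonal and `0` elsewhere. -/
def shiftMatrix (d : ℤ) : Matrix (Fin n) (Fin n) F :=
  Matrix.of fun p q => if (q : ℤ) = p + d then 1 else 0

theorem shiftMatrix_mul_apply {d : ℤ} {p r : Fin n} (h : (r : ℤ) = p + d)
    (M : Matrix (Fin n) (Fin n) F) (q : Fin n) : (shiftMatrix F n d * M) p q = M r q := by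
  rw [Matrix.mul_apply, Finset.sum_eq_single r]
  · simp [shiftMatrix, h]
  · intro s _ hs
    have : (s : ℤ) ≠ p + d := fun hs' => hs (Fin.ext (by omega))
    simp [shiftMatrix, this]
  · simp

theorem diagonal_mul_shiftMatrix_mem (y : Fin n → F) (d : ℤ) :
    Matrix.diagonal y * shiftMatrix F n d ∈ diagonalSubmodule F n d :=
  fun p q h => by simp [shiftMatrix, h]

theorem apply_eq_zero_of_mem_diagonalSubmodule_neg_one {M : Matrix (Fin n) (Fin n) F}
    (hM : M ∈ diagonalSubmodule F n (-1)) {p r : Fin n} (h : ¬ r < p) : M p r = 0 :=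
  hM p r (by omega)

theorem prod_mem_diagonalSubmodule_zero {L : Type*} {A : L → Matrix (Fin n) (Fin n) F} {b : L}
    {k : ℕ} (hA : ∀ t, t ≠ b → A t ∈ diagonalSubmodule F n (-1))
    (hAb : A b ∈ diagonalSubmodule F n k) {w : List L} (nodup : w.Nodup) (hb : b ∈ w)
    (length : w.length = k + 1) : (w.map A).prod ∈ diagonalSubmodule F n 0 := by
  classical
  let degree (t : L) : ℤ := if t = b then k else -1
  have mem_degree (t : L) : A t ∈ diagonalSubmodule F n (degree t) := by
    by_cases h : t = b
    · simpa [degree, h] using hAb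
    · simpa [degree, h] using hA t h
  have degree_erase : (w.erase b).map degree = (w.erase b).map fun _ => -1 :=
    List.map_congr_left fun t ht => if_neg (nodup.mem_erase_iff.1 ht).1
  have degree_sum : (w.map degree).sum = 0 := by
    rw [((List.perm_cons_erase hb).map degree).sum_eq, List.map_cons, List.sum_cons, degree_erase]
    simp [degree, List.length_erase_of_mem hb, length]
  rw [← degree_sum]
  exact SetLike.list_prod_map_mem_graded w degree A fun t _ => mem_degree t

end Diagonals

/-- Noncommutative polynomials in the letters `L`, encoded by the coefficients of their monomials,
which are the words in `L`. Unlike for `FreeAlgebra F L`, coefficients and leading letters can be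
read off directly. -/
abbrev WordPolynomial (F L : Type*) [Zero F] := List L →₀ F

namespace WordPolynomial

section Eval

variable {F L R : Type*} [CommSemiring F] [Semiring R] [Algebra F R]

/-- The value of a noncommutative polynomial at a family of elements of an algebra. -/
noncomputable def eval (A : L → R) : WordPolynomial F L →ₗ[F] R :=
  Finsupp.linearCombination F fun w => (w.map A).prod

theorem eval_apply (A : L → R) (g : WordPolynomial F L) :
    eval A g = ∑ w ∈ g.support, g w • (w.map A).prod :=
  rfl

theorem map_eval {S : Type*} [Semiring S] [Algebra F S] (φ : R →ₐ[F] S) (A : L → R)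
    (g : WordPolynomial F L) : φ (eval A g) = eval (φ ∘ A) g := by
  simp [eval_apply, map_sum, map_list_prod]

end Eval

section LeftQuotient

variable {F L : Type*}

/-- The polynomial `∂_a g` whose coefficient at `w` is the coefficient of `g` at `a w`: the sum of
the tails of the monomials of `g` that begin with the letter `a`. -/
noncomputable def leftQuotient [Zero F] (a : L) (g : WordPolynomial F L) : WordPolynomial F L :=
  g.comapDomain (List.cons a) List.cons_injective.injOn

@[simp]
theorem leftQuotient_apply [Zero F] (a : L) (g : WordPolynomial F L) (w : List L) :
    leftQuotient a g w = g (a :: w) :=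
  rfl

theorem mem_support_leftQuotient [Zero F] {a : L} {g : WordPolynomial F L} {w : List L} :
    w ∈ (leftQuotient a g).support ↔ a :: w ∈ g.support := by
  simp

variable [DecidableEq L]

theorem mapDomain_cons_leftQuotient [AddCommMonoid F] (a : L) (g : WordPolynomial F L) :
    (leftQuotient a g).mapDomain (List.cons a) = g.filter (fun w => w.head? = some a) := by
  ext w
  by_cases hw : w.head? = some a
  · obtain ⟨z, rfl⟩ := List.head?_eq_some_iff.1 hw
    rw [Finsupp.mapDomain_apply List.cons_injective, leftQuotient_apply,
      Finsupp.filter_apply_pos (fun w => w.head? = some a) g hw]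
  · rw [Finsupp.filter_apply_neg (fun w => w.head? = some a) g hw,
      Finsupp.mapDomain_of_notMem_range]
    rintro ⟨z, rfl⟩
    exact hw rfl

theorem eval_eq_mul_eval_leftQuotient_add {R : Type*} [CommSemiring F] [Semiring R] [Algebra F R]
    (A : L → R) (a : L) (g : WordPolynomial F L) :
    eval A g = A a * eval A (leftQuotient a g) +
      eval A (g.filter fun w => ¬ w.head? = some a) := by
  have head_part : eval A (g.filter fun w => w.head? = some a) =
      A a * eval A (leftQuotient a g) := by
    rw [← mapDomain_cons_leftQuotient, eval, Finsupp.linearCombination_mapDomain]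
    simp [Finsupp.linearCombination_apply, Finsupp.sum, Finset.mul_sum]
  rw [← head_part, ← map_add, Finsupp.filter_add_filter_not]

end LeftQuotient

section SquarefreeHomogeneous

variable {F L : Type*} [Zero F]

/-- Every monomial is a product of `k` distinct letters; unlike for a multilinear polynomial,
different monomials may involve different letters. -/
def IsSquarefreeHomogeneous (g : WordPolynomial F L) (k : ℕ) : Prop :=
  ∀ w ∈ g.support, w.Nodup ∧ w.length = k

protected theorem IsSquarefreeHomogeneous.leftQuotient {g : WordPolynomial F L} {k : ℕ}
    (hg : g.IsSquarefreeHomogeneous (k + 1)) (a : L) :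
    (leftQuotient a g).IsSquarefreeHomogeneous k := by
  intro w hw
  obtain ⟨nodup, length⟩ := hg _ (mem_support_leftQuotient.1 hw)
  exact ⟨nodup.of_cons, Nat.succ_injective length⟩

theorem IsSquarefreeHomogeneous.exists_leftQuotient_ne_zero {g : WordPolynomial F L} {k : ℕ}
    (hg : g.IsSquarefreeHomogeneous (k + 1)) (hg0 : g ≠ 0) : ∃ a, leftQuotient a g ≠ 0 := by
  obtain ⟨w, hw⟩ := Finsupp.support_nonempty_iff.2 hg0
  obtain ⟨a, z, rfl⟩ := List.exists_cons_of_length_eq_add_one (hg w hw).2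
  exact ⟨a, Finsupp.support_nonempty_iff.1 ⟨z, mem_support_leftQuotient.2 hw⟩⟩

theorem IsSquarefreeHomogeneous.eq_single_nil {g : WordPolynomial F L}
    (hg : g.IsSquarefreeHomogeneous 0) : g = Finsupp.single [] (g []) :=
  Finsupp.eq_single_iff.2
    ⟨fun w hw => Finset.mem_singleton.2 (List.length_eq_zero_iff.1 (hg w hw).2), rfl⟩

end SquarefreeHomogeneous

section WeightedLetter

variable {F L ι : Type*} [DecidableEq L] [Fintype ι] [DecidableEq ι]

section Semiring

variable [Semiring F]

/-- The family `A` with the matrix of the letter `a` replaced by `S`, its `p`-th row being scaled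
by the unknown `y p`. -/
def weightLetter (A : L → Matrix ι ι F) (a : L) (S : Matrix ι ι F) (y : ι → F) :
    L → Matrix ι ι F :=
  Function.update A a (Matrix.diagonal y * S)

variable (A : L → Matrix ι ι F) (a : L) (S : Matrix ι ι F)

theorem weightLetter_self (y : ι → F) : weightLetter A a S y a = Matrix.diagonal y * S :=
  Function.update_self ..

theorem weightLetter_of_ne {t : L} (ht : t ≠ a) (y : ι → F) : weightLetter A a S y t = A t :=
  Function.update_of_ne ht ..

theorem map_weightLetter_of_notMem {w : List L} (ha : a ∉ w) (y : ι → F) :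
    w.map (weightLetter A a S y) = w.map A :=
  List.map_congr_left fun _ ht => weightLetter_of_ne A a S (ne_of_mem_of_not_mem ht ha) y

variable [Preorder ι] {A a}

theorem dependsOn_Iio_prod_weightLetter_cons {t : L} (hta : t ≠ a)
    (ht : ∀ p r, ¬ r < p → A t p r = 0) {w : List L} {q : ι}
    (hw : ∀ r, DependsOn (fun y => (w.map (weightLetter A a S y)).prod r q) (Set.Iic r)) (p : ι) :
    DependsOn (fun y => ((t :: w).map (weightLetter A a S y)).prod p q) (Set.Iio p) := by
  intro y z hyz
  simp only [List.map_cons, List.prod_cons, Matrix.mul_apply, weightLetter_of_ne A a S hta]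
  refine Finset.sum_congr rfl fun r _ => ?_
  by_cases hrp : r < p
  · exact congrArg (A t p r * ·) (hw r fun s hs => hyz s (lt_of_le_of_lt hs hrp))
  · simp only [ht p r hrp, zero_mul]

variable (hA : ∀ t, t ≠ a → ∀ p r, ¬ r < p → A t p r = 0)
include hA

theorem dependsOn_Iic_prod_weightLetter {w : List L} (hw : w.Nodup) (p q : ι) :
    DependsOn (fun y => (w.map (weightLetter A a S y)).prod p q) (Set.Iic p) := by
  induction w generalizing p with
  | nil => exact fun _ _ _ => rfl
  | cons t w ih =>
    obtain ⟨t_notMem, nodup⟩ := List.nodup_cons.1 hw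
    by_cases hta : t = a
    · subst hta
      intro y z hyz
      simp only [List.map_cons, List.prod_cons, map_weightLetter_of_notMem A t S t_notMem,
        weightLetter_self, Matrix.mul_assoc, Matrix.diagonal_mul, hyz p Set.self_mem_Iic]
    · exact (dependsOn_Iio_prod_weightLetter_cons S hta (hA t hta) (ih nodup) p).mono
        Set.Iio_subset_Iic_self

theorem dependsOn_Iio_prod_weightLetter {w : List L} (hw : w.Nodup) (hwa : w.head? ≠ some a)
    (p q : ι) : DependsOn (fun y => (w.map (weightLetter A a S y)).prod p q) (Set.Iio p) := by
  cases w with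
  | nil => exact fun _ _ _ => rfl
  | cons t w =>
    have hta : t ≠ a := fun h => hwa (congrArg some h)
    exact dependsOn_Iio_prod_weightLetter_cons S hta (hA t hta)
      (fun r => dependsOn_Iic_prod_weightLetter S hA hw.of_cons r q) p

end Semiring

theorem eval_weightLetter_leftQuotient [CommSemiring F] (A : L → Matrix ι ι F) (a : L)
    (S : Matrix ι ι F) {g : WordPolynomial F L} (hg : ∀ w ∈ g.support, w.Nodup) (y : ι → F) :
    eval (weightLetter A a S y) (leftQuotient a g) = eval A (leftQuotient a g) := by
  simp only [eval_apply]
  refine Finset.sum_congr rfl fun w hw => ?_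
  have a_notMem : a ∉ w := (List.nodup_cons.1 (hg _ (mem_support_leftQuotient.1 hw))).1
  rw [map_weightLetter_of_notMem A a S a_notMem]

variable [Preorder ι] {A : L → Matrix ι ι F} {a : L}

theorem dependsOn_Iio_eval_weightLetter [CommSemiring F]
    (hA : ∀ t, t ≠ a → ∀ p r, ¬ r < p → A t p r = 0) (S : Matrix ι ι F) {g : WordPolynomial F L}
    (hg : ∀ w ∈ g.support, w.Nodup ∧ w.head? ≠ some a) (p q : ι) :
    DependsOn (fun y => eval (weightLetter A a S y) g p q) (Set.Iio p) := by
  intro y z hyz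
  simp only [eval_apply, Matrix.sum_apply, Matrix.smul_apply]
  refine Finset.sum_congr rfl fun w hw => congrArg (g w • ·) ?_
  exact dependsOn_Iio_prod_weightLetter S hA (hg w hw).1 (hg w hw).2 p q hyz

theorem exists_eval_weightLetter_apply_eq [Field F]
    (hA : ∀ t, t ≠ a → ∀ p r, ¬ r < p → A t p r = 0) (S : Matrix ι ι F)
    {g : WordPolynomial F L} (hg : ∀ w ∈ g.support, w.Nodup) (col : ι → ι) (β : ι → F) :
    ∃ y : ι → F, ∀ p, (S * eval A (leftQuotient a g)) p (col p) ≠ 0 →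
      eval (weightLetter A a S y) g p (col p) = β p := by
  let coeff (p : ι) : F := (S * eval A (leftQuotient a g)) p (col p)
  let rest (p : ι) (y : ι → F) : F :=
    eval (weightLetter A a S y) (g.filter fun w => ¬ w.head? = some a) p (col p)
  have rest_dependsOn (p : ι) : DependsOn (rest p) (Set.Iio p) := by
    refine dependsOn_Iio_eval_weightLetter hA S (fun w hw => ?_) p (col p)
    rw [Finsupp.support_filter, Finset.mem_filter] at hw
    exact ⟨hg w hw.1, hw.2⟩
  have entry_eq (y : ι → F) (p : ι) :
      eval (weightLetter A a S y) g p (col p) = y p * coeff p + rest p y := by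
    rw [eval_eq_mul_eval_leftQuotient_add _ a, weightLetter_self,
      eval_weightLetter_leftQuotient A a S hg, Matrix.mul_assoc, Matrix.add_apply,
      Matrix.diagonal_mul]
  obtain ⟨y, hy⟩ := exists_forall_eq_apply_of_dependsOn_Iio
    (fun p y => (β p - rest p y) / coeff p) fun p y z hyz => by
      simp only [rest_dependsOn p hyz]
  refine ⟨y, fun p hp => ?_⟩
  rw [entry_eq, hy p, div_mul_cancel₀ _ hp, sub_add_cancel]

end WeightedLetter

section Matrices

variable {F L : Type*} [Field F]

theorem IsSquarefreeHomogeneous.exists_eval_subdiagonal_ne_zero {k : ℕ}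
    {g : WordPolynomial F L} (hg : g.IsSquarefreeHomogeneous k) (hg0 : g ≠ 0) (n : ℕ) :
    ∃ A : L → Matrix (Fin n) (Fin n) F, (∀ t, A t ∈ diagonalSubmodule F n (-1)) ∧
      ∀ p q : Fin n, (p : ℕ) = q + k → eval A g p q ≠ 0 := by
  classical
  induction k generalizing g with
  | zero =>
    refine ⟨0, fun _ => zero_mem _, fun p q hpq => ?_⟩
    obtain rfl : p = q := Fin.ext hpq
    have coeff_ne_zero : g [] ≠ 0 := fun h =>
      hg0 (by rw [hg.eq_single_nil, h, Finsupp.single_zero])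
    rw [hg.eq_single_nil]
    simpa [eval] using coeff_ne_zero
  | succ k ih =>
    obtain ⟨a, ha⟩ := hg.exists_leftQuotient_ne_zero hg0
    obtain ⟨A, hA, eval_ne_zero⟩ := ih (hg.leftQuotient a) ha
    let col (p : Fin n) : Fin n := ⟨p - (k + 1), by omega⟩
    obtain ⟨y, hy⟩ := exists_eval_weightLetter_apply_eq
      (fun t _ p r => apply_eq_zero_of_mem_diagonalSubmodule_neg_one (hA t))
      (shiftMatrix F n (-1)) (fun w hw => (hg w hw).1) col 1
    refine ⟨weightLetter A a (shiftMatrix F n (-1)) y, fun t => ?_, fun p q hpq => ?_⟩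
    · by_cases hta : t = a
      · rw [hta, weightLetter_self]
        exact diagonal_mul_shiftMatrix_mem y (-1)
      · rw [weightLetter_of_ne _ _ _ hta]
        exact hA t
    · obtain rfl : q = col p := Fin.ext (by simp [col, hpq])
      let r : Fin n := ⟨p - 1, by omega⟩
      have hr : (r : ℤ) = p + (-1) := by simp only [r]; omega
      rw [hy p]
      · exact one_ne_zero
      · rw [shiftMatrix_mul_apply hr]
        exact eval_ne_zero r (col p) (by simp only [r]; omega)

theorem IsSquarefreeHomogeneous.exists_eval_isDiag {k : ℕ} {g : WordPolynomial F L}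
    (hg : g.IsSquarefreeHomogeneous (k + 1)) {b : L} (hb : leftQuotient b g ≠ 0)
    (b_mem : ∀ w ∈ g.support, b ∈ w) {n : ℕ} (β : Fin n → F) :
    ∃ A : L → Matrix (Fin n) (Fin n) F, (eval A g).IsDiag ∧
      ∀ p : Fin n, p + k < n → eval A g p p = β p := by
  classical
  obtain ⟨A, hA, eval_ne_zero⟩ := (hg.leftQuotient b).exists_eval_subdiagonal_ne_zero hb n
  obtain ⟨y, hy⟩ := exists_eval_weightLetter_apply_eq (a := b)
    (fun t _ p r => apply_eq_zero_of_mem_diagonalSubmodule_neg_one (hA t))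
    (shiftMatrix F n k) (fun w hw => (hg w hw).1) id β
  refine ⟨weightLetter A b (shiftMatrix F n k) y, ?_, fun p hp => hy p ?_⟩
  · refine isDiag_of_mem_diagonalSubmodule_zero
      (Submodule.sum_mem _ fun w hw => Submodule.smul_mem _ _ ?_)
    refine prod_mem_diagonalSubmodule_zero (fun t ht => ?_) ?_ (hg w hw).1 (b_mem w hw) (hg w hw).2
    · rw [weightLetter_of_ne _ _ _ ht]
      exact hA t
    · rw [weightLetter_self]
      exact diagonal_mul_shiftMatrix_mem y k
  · rw [shiftMatrix_mul_apply (r := ⟨p + k, hp⟩) (Nat.cast_add _ _)]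
    exact eval_ne_zero _ _ rfl

end Matrices

end WordPolynomial

theorem IsMultilinearPoly.exists_eq_eval {F : Type} [Field F] {m : ℕ}
    {f : FreeAlgebra F (Fin m)} (hf : IsMultilinearPoly F m f) :
    ∃ g : WordPolynomial F (Fin m), f = WordPolynomial.eval (FreeAlgebra.ι F) g ∧
      g.IsSquarefreeHomogeneous m ∧ ∀ w ∈ g.support, ∀ b, b ∈ w := by
  classical
  obtain ⟨α, rfl⟩ := hf
  let word (σ : Equiv.Perm (Fin m)) : List (Fin m) := List.ofFn σ
  let g : WordPolynomial F (Fin m) := (Finsupp.equivFunOnFinite.symm α).mapDomain word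
  have exists_word_eq {w : List (Fin m)} (hw : w ∈ g.support) : ∃ σ, word σ = w := by
    obtain ⟨σ, -, hσ⟩ := Finset.mem_image.1 (Finsupp.mapDomain_support hw)
    exact ⟨σ, hσ⟩
  refine ⟨g, ?_, fun w hw => ?_, fun w hw b => ?_⟩
  · rw [WordPolynomial.eval, Finsupp.linearCombination_mapDomain,
      Finsupp.linearCombination_apply, Finsupp.sum_fintype _ _ (by simp)]
    simp [word, List.map_ofFn, Function.comp_def]
  · obtain ⟨σ, rfl⟩ := exists_word_eq hw
    exact ⟨List.nodup_ofFn.2 σ.injective, List.length_ofFn⟩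
  · obtain ⟨σ, rfl⟩ := exists_word_eq hw
    exact List.mem_ofFn.2 (σ.surjective b)

theorem multilinear_is_rich (F : Type) [Field F] (m : ℕ) (hm : 1 ≤ m)
    (f : FreeAlgebra F (Fin m)) (hf0 : f ≠ 0) (hf : IsMultilinearPoly F m f) :
    IsRich F m f (m - 1) := by
  obtain ⟨k, rfl⟩ := Nat.exists_eq_add_of_le' hm
  obtain ⟨g, rfl, hg, mem_word⟩ := hf.exists_eq_eval
  obtain ⟨b, hb⟩ := hg.exists_leftQuotient_ne_zero (by rintro rfl; exact hf0 (map_zero _))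
  intro n _ β
  obtain ⟨A, isDiag, eval_apply_eq⟩ := hg.exists_eval_isDiag hb (fun w hw => mem_word w hw b)
    fun p : Fin n => if hp : p < n - k then β ⟨p, hp⟩ else 0
  have lift_eq : FreeAlgebra.lift F A (WordPolynomial.eval (FreeAlgebra.ι F) g) =
      WordPolynomial.eval A g := by
    rw [WordPolynomial.map_eval, FreeAlgebra.ι_comp_lift]
  refine ⟨A, lift_eq ▸ isDiag, fun i => ?_⟩
  have hi : (i : ℕ) + k < n := Nat.add_lt_of_lt_sub i.isLt
  rw [lift_eq]
  exact (eval_apply_eq _ hi).trans (dif_pos i.isLt)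
end

section
/- Let F be an algebraically closed field, f ∈ F⟨X_1,…,X_m⟩, and k ≥ 1 such that f is noncentral on M_k(F). Let n ≥ k, let Y_1,…,Y_m be generic n×n matrices over F, and let α_1,…,α_n be the roots (with multiplicity) of the characteristic polynomial of f(Y_1,…,Y_m) in an algebraic closure Ω of K = Frac(R). Then the subfield F(α_1,…,α_n) of Ω has transcendence degree at least n − k over F. -/
/-!
Induction on `n`, starting from `n = k`, where there is nothing to show. Specialise the generic
`(n + 1) × (n + 1)` matrices to the block matrices `Yₗ ⊕ 0`, where the `Yₗ` are the generic `n × n`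
matrices, and extend this specialisation to the integral closure of the polynomial ring, where the
eigenvalues live. The eigenvalues of `f` at the generic `(n + 1) × (n + 1)` matrices then specialise
to the eigenvalues of `f(Y₁, …, Yₘ)` together with the constant term `f(0)`. Lifts of independent
eigenvalues remain independent, and the specialisation is injective on the polynomial ring `A` they
generate. An element algebraic over `A` which has the same specialisation as an element `a` of `A`
must be equal to `a`. So an eigenvalue lying over `f(0)` is transcendental over `A`, because it is
different from `f(0)`.

That no constant is an eigenvalue of the noncentral `f` is Amitsur's theorem: a nonzero value of a
noncommutative polynomial at generic matrices has nonzero determinant. To see this, multiply the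
`(i, j)` entry of the generic matrices by the least power `t ^ e` for which the `e`-th power of a
cyclic shift moves `i` to `j`. Setting `t = 1` shows that the value at these matrices is still
nonzero, and it lies in an algebra of shift-equivariant matrices whose coefficient of `t ^ e` is
supported on the `e`-th power of the shift. By equivariance the coefficient of the top power of `t`
has no zero on its support, so its determinant is nonzero, and the determinant of the value at the
generic matrices specialises to a polynomial in `t` with this leading coefficient.
-/

open Polynomial

universe u v w

section FreeAlgebra

theorem map_freeAlgebra_lift {F X A B : Type*} [CommSemiring F] [Semiring A] [Algebra F A]
    [Semiring B] [Algebra F B] (g : A →ₐ[F] B) (a : X → A) (f : FreeAlgebra F X) :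
    g (FreeAlgebra.lift F a f) = FreeAlgebra.lift F (fun x => g (a x)) f :=
  DFunLike.congr_fun (FreeAlgebra.hom_ext (by ext; simp) :
    g.comp (FreeAlgebra.lift F a) = FreeAlgebra.lift F fun x => g (a x)) f

theorem freeAlgebra_lift_mem {F X A : Type*} [CommSemiring F] [Semiring A] [Algebra F A]
    {S : Subalgebra F A} {a : X → A} (ha : ∀ x, a x ∈ S) (f : FreeAlgebra F X) :
    FreeAlgebra.lift F a f ∈ S :=
  map_freeAlgebra_lift S.val (fun x => ⟨a x, ha x⟩) f ▸ Subtype.property _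

end FreeAlgebra

section Determinant

variable {R ι : Type*} [CommRing R] [Fintype ι] [DecidableEq ι]

theorem coeff_det_of_natDegree_le {M : Matrix ι ι R[X]} {d : ℕ}
    (hM : ∀ i j, (M i j).natDegree ≤ d) :
    M.det.coeff (Fintype.card ι * d) = (M.map fun p => p.coeff d).det := by
  simp only [Matrix.det_apply, finsetSum_coeff, coeff_smul, Matrix.map_apply]
  refine Finset.sum_congr rfl fun π _ => congrArg _ ?_
  exact coeff_prod_of_natDegree_le (s := Finset.univ) (fun i => M (π i) i) d fun i _ => hM _ _

theorem det_eq_of_support_perm {N : Matrix ι ι R} (π : Equiv.Perm ι)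
    (hN : ∀ i j, N i j ≠ 0 → π i = j) :
    N.det = Equiv.Perm.sign π * ∏ i, N i (π i) := by
  have hdiag : N.submatrix id π = Matrix.diagonal fun i => N i (π i) := by
    ext i j
    by_cases hij : i = j
    · simp [hij]
    · rw [Matrix.diagonal_apply_ne _ hij, Matrix.submatrix_apply]
      exact not_imp_comm.1 (hN i (π j)) fun h => hij (π.injective h)
  have hperm := Matrix.det_permute' π N
  rw [hdiag, Matrix.det_diagonal] at hperm
  rw [hperm, ← mul_assoc, ← Int.cast_mul, Int.units_coe_mul_self, Int.cast_one, one_mul]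

end Determinant

section Twisted

variable {F ι : Type*} [CommSemiring F] [Fintype ι] [DecidableEq ι]

section Subalgebra

variable {R : Type*} [Semiring R] [Algebra F R]

variable (F R) in
/-- The matrices over `R[t]` in which `t ^ e` occurs only at the positions `(i, τ ^ e i)`. Together
with the equivariance in `twistedSubalgebra`, this models a cyclic algebra by matrices. -/
def homogeneousSubalgebra (τ : Equiv.Perm ι) : Subalgebra F (Matrix ι ι R[X]) where
  carrier := {M | ∀ i j e, (M i j).coeff e ≠ 0 → (τ ^ e) i = j}
  mul_mem' {M N} hM hN i j e he := by
    simp only [Matrix.mul_apply, finsetSum_coeff, coeff_mul] at he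
    obtain ⟨l, -, hl⟩ := Finset.exists_ne_zero_of_sum_ne_zero he
    obtain ⟨⟨a, b⟩, hab, h⟩ := Finset.exists_ne_zero_of_sum_ne_zero hl
    rw [← Finset.HasAntidiagonal.mem_antidiagonal.1 hab, add_comm, pow_add, Equiv.Perm.mul_apply,
      hM i l a (left_ne_zero_of_mul h), hN l j b (right_ne_zero_of_mul h)]
  add_mem' {M N} hM hN i j e he := by
    by_cases h : (M i j).coeff e = 0
    · exact hN i j e (by simpa [h] using he)
    · exact hM i j e h
  algebraMap_mem' c i j e he := by
    rw [Matrix.algebraMap_matrix_apply, Polynomial.algebraMap_apply] at he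
    obtain rfl : i = j := by by_contra h; simp [h] at he
    obtain rfl : e = 0 := by by_contra h; simp [coeff_C, h] at he
    rfl

/-- The matrices of `homogeneousSubalgebra F R τ` on which permuting rows and columns by `τ` has the
same effect as applying `σ` to all coefficients. For a full cycle `τ` it plays the role of a twisted
polynomial ring over `R`. -/
noncomputable def twistedSubalgebra (τ : Equiv.Perm ι) (σ : R →ₐ[F] R) :
    Subalgebra F (Matrix ι ι R[X]) :=
  homogeneousSubalgebra F R τ ⊓
    AlgHom.equalizer (Matrix.reindexAlgEquiv F R[X] τ.symm : _ →ₐ[F] Matrix ι ι R[X])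
      (mapAlgHom σ).mapMatrix

variable {τ : Equiv.Perm ι} {σ : R →ₐ[F] R} {M : Matrix ι ι R[X]}

theorem mem_twistedSubalgebra :
    M ∈ twistedSubalgebra τ σ ↔
      M ∈ homogeneousSubalgebra F R τ ∧ ∀ i j, M (τ i) (τ j) = (M i j).map σ := by
  rw [twistedSubalgebra, Algebra.mem_inf, AlgHom.mem_equalizer, ← Matrix.ext_iff]
  rfl

theorem coeff_ne_zero_of_mem_twistedSubalgebra (hσ : Function.Injective σ)
    (hτ : τ.IsCycleOn Set.univ) (hM : M ∈ twistedSubalgebra τ σ) {d : ℕ} {i₀ j₀ : ι}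
    (h₀ : (M i₀ j₀).coeff d ≠ 0) (i : ι) : (M i ((τ ^ d) i)).coeff d ≠ 0 := by
  rw [mem_twistedSubalgebra] at hM
  have hstep (i j : ι) (h : (M i j).coeff d ≠ 0) : (M (τ i) (τ j)).coeff d ≠ 0 := by
    rw [hM.2, coeff_map]
    exact (map_ne_zero_iff (σ : R →+* R) hσ).2 h
  have horbit (m : ℕ) : (M ((τ ^ m) i₀) ((τ ^ m) j₀)).coeff d ≠ 0 := by
    induction m with
    | zero => exact h₀
    | succ m ih => simpa only [pow_succ', Equiv.Perm.mul_apply] using hstep _ _ ih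
  obtain ⟨m, rfl⟩ : ∃ m : ℕ, (τ ^ m) i₀ = i :=
    hτ.exists_pow_eq' Set.finite_univ (Set.mem_univ i₀) (Set.mem_univ i)
  rw [← Equiv.Perm.mul_apply, ← pow_add, add_comm, pow_add, Equiv.Perm.mul_apply,
    hM.1 i₀ j₀ d h₀]
  exact horbit m

end Subalgebra

theorem det_ne_zero_of_mem_twistedSubalgebra {R : Type*} [CommRing R] [IsDomain R] [Algebra F R]
    {τ : Equiv.Perm ι} {σ : R →ₐ[F] R} (hσ : Function.Injective σ) (hτ : τ.IsCycleOn Set.univ)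
    {M : Matrix ι ι R[X]} (hM : M ∈ twistedSubalgebra τ σ) (hM₀ : M ≠ 0) :
    M.det ≠ 0 := by
  obtain ⟨i₁, j₁, h₁⟩ : ∃ i j, M i j ≠ 0 := by
    by_contra! h
    exact hM₀ (Matrix.ext h)
  have : Nonempty (ι × ι) := ⟨(i₁, j₁)⟩
  obtain ⟨⟨i₀, j₀⟩, hmax⟩ := Finite.exists_max fun p : ι × ι => (M p.1 p.2).degree
  have h₀ : M i₀ j₀ ≠ 0 := fun h => h₁ <| degree_eq_bot.1 <| by simpa [h] using hmax (i₁, j₁)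
  have hlead := coeff_ne_zero_of_mem_twistedSubalgebra hσ hτ hM (leadingCoeff_ne_zero.2 h₀)
  have hdeg (i j : ι) : (M i j).natDegree ≤ (M i₀ j₀).natDegree :=
    natDegree_le_natDegree (hmax (i, j))
  have hdet := coeff_det_of_natDegree_le hdeg
  rw [det_eq_of_support_perm (N := M.map _) (τ ^ (M i₀ j₀).natDegree) fun i j h =>
    (mem_twistedSubalgebra.1 hM).1 i j (M i₀ j₀).natDegree (by simpa using h)] at hdet
  intro h
  rw [h, coeff_zero] at hdet
  refine mul_ne_zero ?_ (Finset.prod_ne_zero_iff.2 fun i _ => hlead i) hdet.symm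
  exact (Units.isUnit _).map (Int.castRingHom R) |>.ne_zero

end Twisted

section Generic

/-- The coordinate ring of a family of generic `ι × ι` matrices indexed by `X`. -/
abbrev GenericRing (F : Type u) [CommSemiring F] (X : Type v) (ι : Type w) : Type (max u v w) :=
  MvPolynomial (X × ι × ι) F

/-- The generic `ι × ι` matrix belonging to the index `x`; its entries are independent
indeterminates. -/
noncomputable def genericMatrix (F : Type u) [CommSemiring F] {X : Type v} (ι : Type w) (x : X) :
    Matrix ι ι (GenericRing F X ι) :=
  Matrix.of fun i j => MvPolynomial.X (x, i, j)

variable {F : Type u} [CommSemiring F] {X : Type v} (ι : Type w) [Fintype ι] [DecidableEq ι]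

/-- The value of the noncommutative polynomial `f` at the generic `ι × ι` matrices. -/
noncomputable def evalGeneric (f : FreeAlgebra F X) : Matrix ι ι (GenericRing F X ι) :=
  FreeAlgebra.lift F (genericMatrix F ι) f

variable {ι}

/-- The specialisation of the generic matrices to given matrices `a x`, as a map on the coordinate
ring. -/
noncomputable def specializeGeneric {A : Type*} [CommSemiring A] [Algebra F A]
    (a : X → Matrix ι ι A) : GenericRing F X ι →ₐ[F] A :=
  MvPolynomial.aeval fun p => a p.1 p.2.1 p.2.2

theorem map_specializeGeneric_evalGeneric {A : Type*} [CommSemiring A] [Algebra F A]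
    (a : X → Matrix ι ι A) (f : FreeAlgebra F X) :
    (evalGeneric ι f).map (specializeGeneric a) = FreeAlgebra.lift F a f := by
  refine (map_freeAlgebra_lift (specializeGeneric a).mapMatrix (genericMatrix F ι) f).trans ?_
  congr 2
  ext x i j
  simp [genericMatrix, specializeGeneric]

end Generic

section Amitsur

theorem exists_invariant_exponent {ι : Type*} [Finite ι] {τ : Equiv.Perm ι}
    (hτ : τ.IsCycleOn Set.univ) :
    ∃ ε : ι → ι → ℕ, (∀ i j, (τ ^ ε i j) i = j) ∧ ∀ i j, ε (τ i) (τ j) = ε i j := by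
  refine ⟨fun i j => sInf {e | (τ ^ e) i = j}, fun i j => ?_, fun i j => ?_⟩
  · exact Nat.sInf_mem (hτ.exists_pow_eq' Set.finite_univ (Set.mem_univ i) (Set.mem_univ j))
  · have (e : ℕ) : (τ ^ e) (τ i) = τ j ↔ (τ ^ e) i = j := by
      rw [← Equiv.Perm.mul_apply, ← pow_succ, pow_succ', Equiv.Perm.mul_apply, τ.apply_eq_iff_eq]
    simp only [this]

/-- The generic matrix belonging to `x` with its `(i, j)` entry multiplied by `t ^ ε i j`. With the
exponents of `exists_invariant_exponent` it lies in a `twistedSubalgebra`, and at `t = 1` it becomes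
the generic matrix again. -/
noncomputable def twistedGenericMatrix (F : Type*) [CommSemiring F] {X ι : Type*} (ε : ι → ι → ℕ)
    (x : X) : Matrix ι ι (GenericRing F X ι)[X] :=
  Matrix.of fun i j => C (MvPolynomial.X (x, i, j)) * Polynomial.X ^ ε i j

variable {F X ι : Type*} [Fintype ι] [DecidableEq ι]

theorem twistedGenericMatrix_mem_twistedSubalgebra [CommSemiring F] {τ : Equiv.Perm ι}
    {ε : ι → ι → ℕ} (hε : ∀ i j, (τ ^ ε i j) i = j) (hετ : ∀ i j, ε (τ i) (τ j) = ε i j) (x : X) :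
    twistedGenericMatrix F ε x ∈
      twistedSubalgebra τ
        (MvPolynomial.rename (Prod.map id (Prod.map τ τ)) : GenericRing F X ι →ₐ[F] _) := by
  refine mem_twistedSubalgebra.2 ⟨fun i j e he => ?_, fun i j => ?_⟩
  · obtain rfl : e = ε i j := by
      by_contra h
      simp [twistedGenericMatrix, coeff_X_pow, h] at he
    exact hε i j
  · simp [twistedGenericMatrix, hετ]

theorem map_eval_one_lift_twistedGenericMatrix [CommSemiring F] (ε : ι → ι → ℕ)
    (f : FreeAlgebra F X) :
    (FreeAlgebra.lift F (twistedGenericMatrix F ε) f).map (eval 1) = evalGeneric ι f := by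
  refine (map_freeAlgebra_lift
    ((Polynomial.aeval (1 : GenericRing F X ι)).restrictScalars F).mapMatrix
    (twistedGenericMatrix F ε) f).trans ?_
  rw [evalGeneric]
  congr 2
  ext x i j
  simp [genericMatrix, twistedGenericMatrix]

theorem det_evalGeneric_ne_zero [CommRing F] [IsDomain F] {f : FreeAlgebra F X}
    (hf : evalGeneric ι f ≠ 0) : (evalGeneric ι f).det ≠ 0 := by
  obtain ⟨τ, hτ, -⟩ := (Finset.univ : Finset ι).exists_cycleOn
  rw [Finset.coe_univ] at hτ
  obtain ⟨ε, hε, hετ⟩ := exists_invariant_exponent hτ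
  have hmem := freeAlgebra_lift_mem
    (twistedGenericMatrix_mem_twistedSubalgebra (F := F) (X := X) hε hετ) f
  have hinj : Function.Injective (Prod.map (id : X → X) (Prod.map τ τ)) :=
    Function.injective_id.prodMap (τ.injective.prodMap τ.injective)
  have hne : FreeAlgebra.lift F (twistedGenericMatrix F ε) f ≠ 0 := by
    intro h
    apply hf
    rw [← map_eval_one_lift_twistedGenericMatrix ε, h]
    ext i j
    simp
  have hdet :=
    det_ne_zero_of_mem_twistedSubalgebra (MvPolynomial.rename_injective _ hinj) hτ hmem hne
  rw [← map_specializeGeneric_evalGeneric] at hdet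
  contrapose! hdet
  exact ((specializeGeneric _).map_det _).symm.trans (by rw [hdet, map_zero])

theorem eval_charpoly_evalGeneric_ne_zero [CommRing F] [IsDomain F] {f : FreeAlgebra F X}
    {c : F} (hf : evalGeneric ι f ≠ algebraMap F _ c) :
    (evalGeneric ι f).charpoly.eval (algebraMap F _ c) ≠ 0 := by
  have hsub : evalGeneric ι (algebraMap F _ c - f) = algebraMap F _ c - evalGeneric ι f := by
    simp only [evalGeneric, map_sub, AlgHom.commutes]
  have h := det_evalGeneric_ne_zero (hsub.trans_ne (sub_ne_zero.2 hf.symm))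
  rw [hsub] at h
  rwa [Matrix.eval_charpoly]

end Amitsur

section Integral

theorem nonempty_algHom_of_isIntegral {R B K : Type*} [CommRing R] [CommRing B] [Algebra R B]
    [FaithfulSMul R B] [Algebra.IsIntegral R B] [Field K] [IsAlgClosed K] [Algebra R K] :
    Nonempty (B →ₐ[R] K) := by
  let P := RingHom.ker (algebraMap R K)
  have : P.IsPrime := RingHom.ker_isPrime _
  obtain ⟨Q, hQ, hQP⟩ := Ideal.nonempty_primesOver (S := B) P
  let : Algebra (R ⧸ P) K := (RingHom.kerLift (algebraMap R K)).toAlgebra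
  have : FaithfulSMul (R ⧸ P) K :=
    (faithfulSMul_iff_algebraMap_injective _ _).2 (RingHom.kerLift_injective _)
  have : IsScalarTower R (R ⧸ P) K := .of_algebraMap_eq fun _ => rfl
  have : Module.IsTorsionFree (R ⧸ P) (B ⧸ Q) :=
    Module.isTorsionFree_iff_faithfulSMul.2 inferInstance
  let L : B ⧸ Q →ₐ[R ⧸ P] K := IsAlgClosed.lift
  exact ⟨(L.restrictScalars R).comp (Ideal.Quotient.mkₐ R Q)⟩

theorem transcendental_of_map_eq {A B K : Type*} [CommRing A] [CommRing B] [IsDomain B]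
    [Algebra A B] [CommRing K] [Algebra A K] [FaithfulSMul A K] (φ : B →ₐ[A] K) {b : B} {a : A}
    (hb : b ≠ algebraMap A B a) (hφ : φ b = algebraMap A K a) : Transcendental A b := by
  intro halg
  have hAK : Function.Injective ((φ : B →+* K).comp (algebraMap A B)) := by
    rw [φ.comp_algebraMap]
    exact FaithfulSMul.algebraMap_injective A K
  have : IsDomain A := (hAK.of_comp (f := φ)).isDomain (algebraMap A B)
  refine Ideal.comap_ne_bot_of_algebraic_mem (I := RingHom.ker (φ : B →+* K)) (sub_ne_zero.2 hb)
    (by simp [RingHom.mem_ker, hφ]) (halg.sub (isAlgebraic_algebraMap a)) ?_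
  rw [RingHom.comap_ker]
  exact (RingHom.injective_iff_ker_eq_bot _).1 hAK

theorem algebraicIndependent_option_of_map_eq {F B K ι : Type*} [CommRing F] [CommRing B]
    [IsDomain B] [Algebra F B] [CommRing K] [Algebra F K] (φ : B →ₐ[F] K) {y : ι → B}
    (hy : AlgebraicIndependent F (φ ∘ y)) {b : B} {c : F} (hb : b ≠ algebraMap F B c)
    (hφ : φ b = algebraMap F K c) : AlgebraicIndependent F fun o : Option ι => o.elim b y := by
  have hyB := AlgebraicIndependent.of_comp φ hy
  rw [hyB.option_iff_transcendental]
  let A := Algebra.adjoin F (Set.range y)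
  have hφA : Function.Injective (φ.comp A.val) := by
    have haeval : φ.comp A.val ∘ hyB.aevalEquiv = MvPolynomial.aeval (φ ∘ y) :=
      funext fun p => MvPolynomial.comp_aeval_apply y φ p
    rw [← Function.Injective.of_comp_iff' _ hyB.aevalEquiv.bijective, haeval]
    exact hy
  let : Algebra A K := (φ.comp A.val).toAlgebra
  have : FaithfulSMul A K := (faithfulSMul_iff_algebraMap_injective _ _).2 hφA
  let φA : B →ₐ[A] K := { (φ : B →+* K) with commutes' := fun _ => rfl }
  exact transcendental_of_map_eq φA (a := algebraMap F A c) hb (hφ.trans (φ.commutes c).symm)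

theorem exists_algebraicIndependent_option_roots {F R Ω K ι : Type*} [CommRing F] [CommRing R]
    [Algebra F R] [CommRing Ω] [IsDomain Ω] [Algebra F Ω] [Algebra R Ω] [IsScalarTower F R Ω]
    [FaithfulSMul R Ω] [Field K] [IsAlgClosed K] [Algebra F K] [Algebra R K] [IsScalarTower F R K]
    {p : R[X]} (hp : p.Monic) (hsplit : (p.map (algebraMap R Ω)).Splits) {y : ι → K}
    (hy : AlgebraicIndependent F y) (hyp : ∀ i, y i ∈ p.rootSet K) {c : F}
    (hcK : algebraMap F K c ∈ p.rootSet K) (hcΩ : algebraMap F Ω c ∉ p.rootSet Ω) :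
    ∃ x : Option ι → Ω, AlgebraicIndependent F x ∧ ∀ o, x o ∈ p.rootSet Ω := by
  let B := integralClosure R Ω
  have hB : Function.Injective (algebraMap B Ω) := FaithfulSMul.algebraMap_injective B Ω
  have : FaithfulSMul R B := .tower_bot R B Ω
  have hsplitB : (p.map (algebraMap R B)).Splits := by
    refine Splits.of_splits_map_of_injective hB ?_ fun a ha => ?_
    · rwa [map_map, ← IsScalarTower.algebraMap_eq]
    · rw [map_map, ← IsScalarTower.algebraMap_eq] at ha
      exact ⟨⟨a, p, hp, eval_map (algebraMap R Ω) a ▸ isRoot_of_mem_roots ha⟩, rfl⟩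
  obtain ⟨φ⟩ := nonempty_algHom_of_isIntegral (R := R) (B := B) (K := K)
  have hφ := hsplitB.image_rootSet_of_map_ne_zero φ (hp.map _).ne_zero
  simp only [← hφ, Set.mem_image] at hyp hcK
  choose z hz hzy using hyp
  obtain ⟨b, hb, hbc⟩ := hcK
  obtain rfl : φ ∘ z = y := funext hzy
  have hBΩ {x : B} (hx : x ∈ p.rootSet B) : (x : Ω) ∈ p.rootSet Ω :=
    rootSet_maps_to' (fun h => ((hp.map _).ne_zero h).elim) (IsScalarTower.toAlgHom R B Ω) hx
  have hbc' : b ≠ algebraMap F B c := by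
    rintro rfl
    exact hcΩ (hBΩ hb)
  have hind := algebraicIndependent_option_of_map_eq (φ.restrictScalars F) hy hbc' hbc
  refine ⟨_, hind.map' (f := IsScalarTower.toAlgHom F B Ω) hB, ?_⟩
  rintro (_ | i)
  exacts [hBΩ hb, hBΩ (hz i)]

end Integral

section ExtendByZero

variable {F A X ι ι' κ : Type*}

/-- The block diagonal matrix `M ⊕ 0`, with rows and columns relabelled along `e`. It embeds smaller
matrices into larger ones without a unit. -/
def extendByZero [Zero A] (e : ι ⊕ κ ≃ ι') (M : Matrix ι ι A) : Matrix ι' ι' A :=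
  Matrix.reindex e e (Matrix.fromBlocks M 0 0 0)

variable [CommSemiring F] [Fintype ι] [DecidableEq ι] [Fintype ι'] [DecidableEq ι']

theorem lift_fromBlocks_zero [Semiring A] [Algebra F A] [Fintype κ] [DecidableEq κ]
    (a : X → Matrix ι ι A) (f : FreeAlgebra F X) :
    FreeAlgebra.lift F (fun x => Matrix.fromBlocks (a x) 0 0 (0 : Matrix κ κ A)) f =
      Matrix.fromBlocks (FreeAlgebra.lift F a f) 0 0
        (algebraMap F _ (FreeAlgebra.algebraMapInv f)) := by
  induction f using FreeAlgebra.induction with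
  | grade0 c =>
    simp [Algebra.algebraMap_eq_smul_one, ← Matrix.fromBlocks_one, Matrix.fromBlocks_smul]
  | grade1 x => simp [FreeAlgebra.algebraMapInv]
  | mul f g hf hg => simp [hf, hg, Matrix.fromBlocks_multiply]
  | add f g hf hg => simp [hf, hg, Matrix.fromBlocks_add]

theorem lift_extendByZero [Semiring A] [Algebra F A] [Fintype κ] [DecidableEq κ]
    (e : ι ⊕ κ ≃ ι') (a : X → Matrix ι ι A) (f : FreeAlgebra F X) :
    FreeAlgebra.lift F (fun x => extendByZero e (a x)) f =
      Matrix.reindex e e (Matrix.fromBlocks (FreeAlgebra.lift F a f) 0 0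
        (algebraMap F _ (FreeAlgebra.algebraMapInv f))) := by
  rw [← lift_fromBlocks_zero]
  exact (map_freeAlgebra_lift (Matrix.reindexAlgEquiv F A e).toAlgHom _ f).symm

theorem charpoly_lift_extendByZero [CommRing A] [Algebra F A] [Fintype κ]
    (e : ι ⊕ κ ≃ ι') (a : X → Matrix ι ι A) (f : FreeAlgebra F X) :
    (FreeAlgebra.lift F (fun x => extendByZero e (a x)) f).charpoly =
      (FreeAlgebra.lift F a f).charpoly *
        (Polynomial.X - C (algebraMap F A (FreeAlgebra.algebraMapInv f))) ^ Fintype.card κ := by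
  classical
  rw [lift_extendByZero, Matrix.charpoly_reindex, Matrix.charpoly_fromBlocks_zero₁₂,
    Matrix.algebraMap_eq_diagonal, Matrix.charpoly_diagonal]
  simp

theorem evalGeneric_ne_algebraMap [CommSemiring A] [Algebra F A] (e : ι ⊕ κ ≃ ι')
    {a : X → Matrix ι ι A} {f : FreeAlgebra F X} {c : F}
    (ha : FreeAlgebra.lift F a f ≠ algebraMap F _ c) :
    evalGeneric ι' f ≠ algebraMap F _ c := by
  classical
  have : Finite κ := .of_injective _ (e.injective.comp Sum.inr_injective)
  have := Fintype.ofFinite κ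
  intro h
  have hmap := map_specializeGeneric_evalGeneric (fun x => extendByZero e (a x)) f
  rw [h, lift_extendByZero, ← AlgHom.mapMatrix_apply, AlgHom.commutes,
    Matrix.algebraMap_eq_diagonal] at hmap
  refine ha (Matrix.ext fun i j => ?_)
  simpa [Matrix.diagonal_apply, Matrix.algebraMap_matrix_apply] using
    (congrFun₂ hmap (e (.inl i)) (e (.inl j))).symm

end ExtendByZero

section Eigenvalues

instance faithfulSMul_algebraicClosure_fractionRing (R : Type*) [CommRing R] [IsDomain R] :
    FaithfulSMul R (AlgebraicClosure (FractionRing R)) :=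
  .trans R (FractionRing R) _

theorem exists_algebraicIndependent_option_eigenvalues {F X ι κ ι' ν Ω K : Type*} [CommRing F]
    [IsDomain F] {f : FreeAlgebra F X} [Fintype ι] [DecidableEq ι] [Nonempty κ] [Fintype ι']
    [DecidableEq ι'] (e : ι ⊕ κ ≃ ι')
    (hf : ∀ c : F, evalGeneric ι' f ≠ algebraMap F _ c) [CommRing Ω] [IsDomain Ω]
    [Algebra F Ω] [Algebra (GenericRing F X ι') Ω] [IsScalarTower F (GenericRing F X ι') Ω]
    [FaithfulSMul (GenericRing F X ι') Ω]
    (hsplit : ((evalGeneric ι' f).charpoly.map (algebraMap _ Ω)).Splits)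
    [Field K] [IsAlgClosed K] [Algebra F K] [Algebra (GenericRing F X ι) K]
    [IsScalarTower F (GenericRing F X ι) K] {y : ν → K} (hy : AlgebraicIndependent F y)
    (hroot : ∀ i, y i ∈ (evalGeneric ι f).charpoly.rootSet K) :
    ∃ x : Option ν → Ω, AlgebraicIndependent F x ∧
      ∀ o, x o ∈ (evalGeneric ι' f).charpoly.rootSet Ω := by
  have : Finite κ := .of_injective _ (e.injective.comp Sum.inr_injective)
  have := Fintype.ofFinite κ
  let ψ : GenericRing F X ι' →ₐ[F] K :=
    specializeGeneric fun x => extendByZero e ((genericMatrix F ι x).map (algebraMap _ K))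
  let : Algebra (GenericRing F X ι') K := ψ.toAlgebra
  have : IsScalarTower F (GenericRing F X ι') K := .of_algebraMap_eq fun c => (ψ.commutes c).symm
  let c₀ : F := FreeAlgebra.algebraMapInv f
  have hmap : (evalGeneric ι' f).charpoly.map (algebraMap _ K) =
      ((evalGeneric ι f).charpoly.map (algebraMap _ K)) *
        (Polynomial.X - C (algebraMap F K c₀)) ^ Fintype.card κ := by
    have hι' : (evalGeneric ι' f).map (algebraMap _ K) = _ := map_specializeGeneric_evalGeneric _ f
    have hι : (evalGeneric ι f).map (algebraMap _ K) = _ :=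
      map_freeAlgebra_lift (IsScalarTower.toAlgHom F (GenericRing F X ι) K).mapMatrix
        (genericMatrix F ι) f
    rw [← Matrix.charpoly_map, ← Matrix.charpoly_map, hι', hι, charpoly_lift_extendByZero]
    rfl
  have hmem {z : K} : z ∈ (evalGeneric ι' f).charpoly.rootSet K ↔
      z ∈ (evalGeneric ι f).charpoly.rootSet K ∨ z = algebraMap F K c₀ := by
    simp only [(Matrix.charpoly_monic _).mem_rootSet, ← eval_map_algebraMap, hmap, eval_mul,
      eval_pow, mul_eq_zero]
    simp [sub_eq_zero]
  refine exists_algebraicIndependent_option_roots (Matrix.charpoly_monic _)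
    hsplit hy (fun i => hmem.2 (.inl (hroot i))) (c := c₀) (hmem.2 (.inr rfl)) ?_
  rw [(Matrix.charpoly_monic _).mem_rootSet,
    IsScalarTower.algebraMap_apply F (GenericRing F X ι') Ω, aeval_algebraMap_apply,
    coe_aeval_eq_eval, map_eq_zero_iff _ (FaithfulSMul.algebraMap_injective _ Ω)]
  exact eval_charpoly_evalGeneric_ne_zero (hf c₀)

theorem exists_algebraicIndependent_eigenvalues {F : Type u} [CommRing F] [IsDomain F]
    {X : Type v} {f : FreeAlgebra F X} {k : ℕ} {a : X → Matrix (Fin k) (Fin k) F}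
    (ha : ∀ c : F, FreeAlgebra.lift F a f ≠ algebraMap F _ c) (d : ℕ) {Ω : Type (max u v)}
    [CommRing Ω] [IsDomain Ω] [Algebra F Ω] [Algebra (GenericRing F X (Fin (k + d))) Ω]
    [IsScalarTower F (GenericRing F X (Fin (k + d))) Ω]
    [FaithfulSMul (GenericRing F X (Fin (k + d))) Ω]
    (hsplit : ((evalGeneric (Fin (k + d)) f).charpoly.map (algebraMap _ Ω)).Splits) :
    ∃ x : Fin d → Ω, AlgebraicIndependent F x ∧
      ∀ i, x i ∈ (evalGeneric (Fin (k + d)) f).charpoly.rootSet Ω := by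
  induction d generalizing Ω with
  | zero =>
    refine ⟨Fin.elim0, ?_, Fin.rec0⟩
    rw [algebraicIndependent_empty_type_iff,
      IsScalarTower.algebraMap_eq F (GenericRing F X (Fin (k + 0))) Ω]
    exact (FaithfulSMul.algebraMap_injective _ Ω).comp (MvPolynomial.C_injective _ F)
  | succ d ih =>
    let K := AlgebraicClosure (FractionRing (GenericRing F X (Fin (k + d))))
    obtain ⟨y, hy, hroot⟩ := ih (Ω := K) (IsAlgClosed.splits _)
    have hf (c : F) := evalGeneric_ne_algebraMap (finSumFinEquiv (n := d + 1)) (ha c)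
    obtain ⟨x, hx, hxroot⟩ := exists_algebraicIndependent_option_eigenvalues
      (finSumFinEquiv (m := k + d) (n := 1)) hf hsplit hy hroot
    exact ⟨x ∘ finSuccEquiv d, (algebraicIndependent_equiv (finSuccEquiv d)).2 hx,
      fun i => hxroot _⟩

theorem trdeg_of_eigenvalues_general {F : Type u} [CommRing F] [IsDomain F] {X : Type v} {k n : ℕ}
    (hkn : k ≤ n) (f : FreeAlgebra F X)
    (hnc : ∃ a : X → Matrix (Fin k) (Fin k) F, ∀ c : F, FreeAlgebra.lift F a f ≠ c • 1)
    {Ω : Type (max u v)} [CommRing Ω] [IsDomain Ω] [Algebra F Ω]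
    [Algebra (GenericRing F X (Fin n)) Ω] [IsScalarTower F (GenericRing F X (Fin n)) Ω]
    [FaithfulSMul (GenericRing F X (Fin n)) Ω]
    (α : Fin n → Ω)
    (hα : (evalGeneric (Fin n) f).charpoly.map (algebraMap _ Ω) = ∏ i, (Polynomial.X - C (α i))) :
    ∃ s : Finset Ω, (s : Set Ω) ⊆ Set.range α ∧ s.card = n - k ∧
      AlgebraicIndependent F ((↑) : s → Ω) := by
  classical
  obtain ⟨d, rfl⟩ := Nat.exists_eq_add_of_le hkn
  obtain ⟨a, ha⟩ := hnc
  simp only [← Algebra.algebraMap_eq_smul_one] at ha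
  have hsplit : ((evalGeneric (Fin (k + d)) f).charpoly.map (algebraMap _ Ω)).Splits :=
    hα ▸ Splits.prod fun i _ => Splits.X_sub_C (α i)
  obtain ⟨x, hx, hroot⟩ := exists_algebraicIndependent_eigenvalues ha d hsplit
  refine ⟨Finset.univ.image x, ?_, ?_, ?_⟩
  · simp only [Finset.coe_image, Finset.coe_univ, Set.image_univ, Set.range_subset_iff]
    intro i
    have hxi := hroot i
    rw [(Matrix.charpoly_monic _).mem_rootSet, ← eval_map_algebraMap, hα, eval_prod,
      Finset.prod_eq_zero_iff] at hxi
    simpa [sub_eq_zero, eq_comm] using hxi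
  · simp [Finset.card_image_of_injective _ hx.injective]
  · have hind := hx.coe_range
    rwa [← Set.image_univ, ← Finset.coe_univ, ← Finset.coe_image] at hind

end Eigenvalues

/-- Let `F` be algebraically closed, `f` noncentral on `M_k(F)`, `n ≥ k`, and let
`Y₁,…,Y_m` be the generic `n × n` matrices over `R = F[x^{(ℓ)}_{i,j}]`. If
`α₁,…,α_n` are the roots (with multiplicity) of the characteristic polynomial of
`f(Y₁,…,Y_m)` in an algebraic closure `Ω` of `K = Frac R`, then the subfield
`F(α₁,…,α_n)` of `Ω` has transcendence degree at least `n - k` over `F`, i.e.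
it contains `n - k` elements that are algebraically independent over `F`. -/
theorem trdeg_of_eigenvalues (F : Type) [Field F] [IsAlgClosed F] (m k n : ℕ)
    (hk : 1 ≤ k) (hkn : k ≤ n) (f : FreeAlgebra F (Fin m))
    (hnc : ∃ a : Fin m → Matrix (Fin k) (Fin k) F,
      ∀ c : F, FreeAlgebra.lift F a f ≠ c • (1 : Matrix (Fin k) (Fin k) F))
    (α : Fin n → AlgebraicClosure (FractionRing (MvPolynomial (Fin m × Fin n × Fin n) F)))
    (hα : (Matrix.charpoly
        (FreeAlgebra.lift F (fun ℓ : Fin m =>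
          (Matrix.of fun i j : Fin n => MvPolynomial.X (ℓ, i, j) :
            Matrix (Fin n) (Fin n) (MvPolynomial (Fin m × Fin n × Fin n) F))) f)).map
        (algebraMap (MvPolynomial (Fin m × Fin n × Fin n) F)
          (AlgebraicClosure (FractionRing (MvPolynomial (Fin m × Fin n × Fin n) F))))
      = ∏ i : Fin n, (Polynomial.X - Polynomial.C (α i))) :
    ∃ s : Finset (AlgebraicClosure (FractionRing (MvPolynomial (Fin m × Fin n × Fin n) F))),
      (↑s : Set (AlgebraicClosure (FractionRing (MvPolynomial (Fin m × Fin n × Fin n) F)))) ⊆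
        (IntermediateField.adjoin F (Set.range α) :
          Set (AlgebraicClosure (FractionRing (MvPolynomial (Fin m × Fin n × Fin n) F)))) ∧
      s.card = n - k ∧
      AlgebraicIndependent F ((↑) : s →
        AlgebraicClosure (FractionRing (MvPolynomial (Fin m × Fin n × Fin n) F))) := by
  obtain ⟨s, hs, hind⟩ := trdeg_of_eigenvalues_general hkn f hnc α hα
  exact ⟨s, hs.trans (IntermediateField.subset_adjoin F _), hind⟩
end

section
/- Let F be a field, m, n ≥ 1, and let f = Σ_{σ ∈ Sym(m)} α_σ X_{σ(1)}⋯X_{σ(m)} ∈ F⟨X_1,…,X_m⟩ be multilinear. Let q_1,…,q_m ∈ ℤ with q_1 + ⋯ + q_m = 0, let μ_{i,j} (1 ≤ i ≤ m, 1 ≤ j ≤ n) be commuting indeterminates, let R = F[μ_{i,j}], and define x_i ∈ M_n(R) by (x_i)_{j,k} = μ_{i,j} if k = j + q_i and 1 ≤ j, k ≤ n, and (x_i)_{j,k} = 0 otherwise. For σ ∈ Sym(m) and 1 ≤ j ≤ n define j_1 = j and j_{t+1} = j_t + q_{σ(t)} for t = 1,…,m (so j_{m+1} = j), and say σ is kosher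 at j if 1 ≤ j_t ≤ n for all t = 1,…,m. Then f(x_1,…,x_m) is a diagonal matrix and, for every 1 ≤ j ≤ n, its (j,j) entry equals Σ_{σ kosher at j} α_σ · ∏_{t=1}^{m} μ_{σ(t), j_t}. -/
/-- The index `j_{t+1}` (0-indexed: `Sfun … 0 = j`, the paper's `j₁`):
`j_t = j + Σ_{s < t} q_{σ(s)}`. -/
def Sfun {m : ℕ} (n : ℕ) (q : Fin m → ℤ) (σ : Equiv.Perm (Fin m)) (j : Fin n)
    (t : Fin m) : ℤ :=
  (j : ℤ) + ∑ s ∈ Finset.univ.filter (fun s : Fin m => s < t), q (σ s)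

/-- `σ` is kosher at `j`: all the indices `j₁, …, j_m` are legal row indices. -/
def Kosher {m : ℕ} (n : ℕ) (q : Fin m → ℤ) (σ : Equiv.Perm (Fin m)) (j : Fin n) : Prop :=
  ∀ t : Fin m, 0 ≤ Sfun n q σ j t ∧ Sfun n q σ j t < n

/-- The indeterminate `μ_{i,z}` for an integer index `z`, extended by `0` outside
the legal range `0 ≤ z < n` (0-indexed). -/
noncomputable def muExt (F : Type) [Field F] (m n : ℕ) (i : Fin m) (z : ℤ) :
    MvPolynomial (Fin m × Fin n) F :=
  if h : 0 ≤ z ∧ z < n then MvPolynomial.X (i, ⟨z.toNat, by omega⟩) else 0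

/-! A matrix unit `e_{j,k}` is a step from `j` to `k`, so the `(j, k)` entry of a product of
matrices is a sum over walks from `j` to `k`. The matrix `x i` only allows steps that raise the
position by exactly `q i`, so a word in these matrices admits at most one walk starting at `j`. That
walk visits the prefix sums of the degrees, starting from the position of `j`. It contributes its
weight if every position visited is legal, and nothing otherwise. In a multilinear polynomial all
words have the same total degree `∑ i, q i`, so all these walks end at the same position, which is
that of `j` when the total is `0`. -/

section WeightedShift

variable {A G J : Type*} [DecidableEq G] [Add G]

/-- The matrix `∑ c j • e_{j,k}`, summed over the pairs with `p k = p j + g`. It is homogeneous of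
degree `g` in the elementary grading of the matrix algebra, in which `p` assigns a position in `G`
to each index. -/
def weightedShift [Zero A] (p : J → G) (g : G) (c : J → A) : Matrix J J A :=
  Matrix.of fun j k => if p k = p j + g then c j else 0

lemma mul_weightedShift_apply [NonUnitalNonAssocSemiring A] [Fintype J] {p : J → G}
    (hp : p.Injective) {M : Matrix J J A} {j : J} {z : G} {a : A}
    (hM : ∀ i, M j i = if p i = z then a else 0) (g : G) (c : J → A) (k : J) :
    (M * weightedShift p g c) j k =
      if p k = z + g then a * Function.extend p c 0 z else 0 := by
  simp only [Matrix.mul_apply, hM, weightedShift, Matrix.of_apply]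
  by_cases hz : ∃ i, p i = z
  · obtain ⟨i, rfl⟩ := hz
    rw [Finset.sum_eq_single i (fun b _ hb => by simp [hp.ne hb]) (by simp)]
    simp [hp.extend_apply]
  · rw [Function.extend_apply' _ _ _ hz]
    simp [not_exists.1 hz]

end WeightedShift

section WalkWeight

variable {A G J : Type*} [AddMonoid G]

/-- The walk from the position `p j` that takes the steps `g 0, g 1, …` in turn is legal if each of
these steps starts at a position attained by `p`; where the walk ends is not constrained. For the
positions `0, …, n - 1` in `ℤ` and the steps `q (σ 0), q (σ 1), …` this says that `σ` is kosher
at `j`. -/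
def IsLegalWalk (p : J → G) {l : ℕ} (g : Fin l → G) (j : J) : Prop :=
  ∀ t : Fin l, p j + Fin.partialSum g t.castSucc ∈ Set.range p

/-- The weight of the walk from the position `p j` that takes the steps `g 0, g 1, …` in turn, where
step `t` out of index `k` has weight `c t k`. The weights are extended by `0` to the positions that
`p` does not attain. -/
noncomputable def walkWeight [MonoidWithZero A] (p : J → G) {l : ℕ} (g : Fin l → G)
    (c : Fin l → J → A) (j : J) : A :=
  (List.ofFn fun t => Function.extend p (c t) 0 (p j + Fin.partialSum g t.castSucc)).prod

lemma walkWeight_eq_zero [MonoidWithZero A] {p : J → G} {l : ℕ} {g : Fin l → G}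
    {j : J} (hj : ¬IsLegalWalk p g j) (c : Fin l → J → A) : walkWeight p g c j = 0 := by
  obtain ⟨t, ht⟩ := not_forall.1 hj
  exact List.prod_eq_zero <| List.mem_ofFn.2 ⟨t, Function.extend_apply' _ _ _ ht⟩

lemma walkWeight_succ [MonoidWithZero A] (p : J → G) {l : ℕ} (g : Fin (l + 1) → G)
    (c : Fin (l + 1) → J → A) (j : J) :
    walkWeight p g c j = walkWeight p (Fin.init g) (Fin.init c) j *
      Function.extend p (c (Fin.last l)) 0 (p j + Fin.partialSum g (Fin.last l).castSucc) := by
  simp only [walkWeight, List.ofFn_succ', List.concat_eq_append, List.prod_append,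
    List.prod_singleton, Fin.partialSum_init, Fin.init]

lemma prod_ofFn_weightedShift_apply [Semiring A] [DecidableEq G] [Fintype J] [DecidableEq J]
    {p : J → G} (hp : p.Injective) {l : ℕ} (g : Fin l → G) (c : Fin l → J → A) (j k : J) :
    (List.ofFn fun t => weightedShift p (g t) (c t)).prod j k =
      if p k = p j + Fin.partialSum g (Fin.last l) then walkWeight p g c j else 0 := by
  induction l generalizing k with
  | zero => simp [walkWeight, Matrix.one_apply, hp.eq_iff, eq_comm]
  | succ l ih =>
    have prod_split : (List.ofFn fun t => weightedShift p (g t) (c t)).prod =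
        (List.ofFn fun t => weightedShift p (Fin.init g t) (Fin.init c t)).prod *
          weightedShift p (g (Fin.last l)) (c (Fin.last l)) := by
      rw [List.ofFn_succ', List.concat_eq_append, List.prod_append, List.prod_singleton]
      rfl
    rw [prod_split, mul_weightedShift_apply hp (ih (Fin.init g) (Fin.init c)), walkWeight_succ,
      Fin.partialSum_init, add_assoc, ← Fin.partialSum_succ, Fin.succ_last]

end WalkWeight

section PartialSum

variable {M : Type*} [AddCommMonoid M] {m : ℕ}

lemma partialSum_castSucc_eq_sum_lt (g : Fin m → M) (t : Fin m) :
    Fin.partialSum g t.castSucc = ∑ s with s < t, g s :=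
  List.sum_take_ofFn g t

lemma partialSum_last_eq_sum (g : Fin m → M) : Fin.partialSum g (Fin.last m) = ∑ s, g s := by
  simp [Fin.partialSum, List.take_of_length_le, List.sum_ofFn]

end PartialSum

lemma lift_prod_ofFn_ι {R ι A : Type*} [CommSemiring R] [Semiring A] [Algebra R A] {l : ℕ}
    (x : ι → A) (w : Fin l → ι) :
    FreeAlgebra.lift R x (List.ofFn fun t => FreeAlgebra.ι R (w t)).prod =
      (List.ofFn fun t => x (w t)).prod := by
  simp [map_list_prod, List.map_ofFn, Function.comp_def]

open scoped Classical in
theorem multilinear_graded_eval_entries_general {R A G J : Type*} [CommSemiring R] [Semiring A]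
    [Algebra R A] [AddCommMonoid G] [DecidableEq G] [Fintype J] [DecidableEq J] {p : J → G}
    (hp : p.Injective) {m : ℕ} (α : Equiv.Perm (Fin m) → R) (q : Fin m → G) (c : Fin m → J → A)
    (j k : J) :
    FreeAlgebra.lift R (fun i => weightedShift p (q i) (c i))
        (∑ σ : Equiv.Perm (Fin m), α σ • (List.ofFn fun t => FreeAlgebra.ι R (σ t)).prod) j k =
      if p k = p j + ∑ i, q i then
        ∑ σ ∈ Finset.univ.filter (fun σ : Equiv.Perm (Fin m) => IsLegalWalk p (q ∘ σ) j),
          α σ • walkWeight p (q ∘ σ) (c ∘ σ) j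
      else 0 := by
  have word_apply (σ : Equiv.Perm (Fin m)) :
      (List.ofFn fun t => weightedShift p (q (σ t)) (c (σ t))).prod j k =
        if p k = p j + ∑ i, q i then walkWeight p (q ∘ σ) (c ∘ σ) j else 0 := by
    have total_degree : Fin.partialSum (q ∘ σ) (Fin.last m) = ∑ i, q i :=
      (partialSum_last_eq_sum _).trans (Equiv.sum_comp σ q)
    exact total_degree ▸ prod_ofFn_weightedShift_apply hp (q ∘ σ) (c ∘ σ) j k
  simp only [map_sum, map_smul, lift_prod_ofFn_ι, Matrix.sum_apply, Matrix.smul_apply, word_apply]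
  split_ifs
  · refine (Finset.sum_filter_of_ne fun σ _ hσ => ?_).symm
    contrapose! hσ
    rw [walkWeight_eq_zero hσ, smul_zero]
  · simp

section IntegerPositions

lemma fin_intCast_injective (n : ℕ) : Function.Injective fun j : Fin n => (j : ℤ) :=
  Nat.cast_injective.comp Fin.val_injective

lemma mem_range_fin_intCast_iff {n : ℕ} {z : ℤ} :
    z ∈ Set.range (fun j : Fin n => (j : ℤ)) ↔ 0 ≤ z ∧ z < n := by
  refine ⟨?_, fun hz => ⟨⟨z.toNat, by omega⟩, Int.toNat_of_nonneg hz.1⟩⟩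
  rintro ⟨j, rfl⟩
  exact ⟨Int.natCast_nonneg j, Int.ofNat_lt.2 j.isLt⟩

lemma muExt_eq_extend (F : Type) [Field F] {m n : ℕ} (i : Fin m) (z : ℤ) :
    muExt F m n i z =
      Function.extend (fun j : Fin n => (j : ℤ)) (fun j => MvPolynomial.X (i, j)) 0 z := by
  by_cases hz : z ∈ Set.range (fun j : Fin n => (j : ℤ))
  · obtain ⟨j, rfl⟩ := hz
    rw [(fin_intCast_injective n).extend_apply]
    simp [muExt]
  · rw [Function.extend_apply' _ _ _ hz, muExt, dif_neg (mem_range_fin_intCast_iff.not.1 hz)]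
    rfl

variable {m n : ℕ} (q : Fin m → ℤ) (σ : Equiv.Perm (Fin m)) (j : Fin n)

lemma Sfun_eq_add_partialSum (t : Fin m) :
    Sfun n q σ j t = j + Fin.partialSum (q ∘ σ) t.castSucc := by
  rw [partialSum_castSucc_eq_sum_lt]
  rfl

lemma kosher_iff_isLegalWalk :
    Kosher n q σ j ↔ IsLegalWalk (fun j : Fin n => (j : ℤ)) (q ∘ σ) j := by
  simp only [Kosher, IsLegalWalk, Sfun_eq_add_partialSum, mem_range_fin_intCast_iff]

lemma prod_muExt_eq_walkWeight (F : Type) [Field F] :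
    ∏ t, muExt F m n (σ t) (Sfun n q σ j t) =
      walkWeight (fun j : Fin n => (j : ℤ)) (q ∘ σ)
        ((fun i k => MvPolynomial.X (i, k)) ∘ σ) j := by
  simp only [walkWeight, Function.comp_apply, List.prod_ofFn, muExt_eq_extend,
    Sfun_eq_add_partialSum]

end IntegerPositions

open scoped Classical in
/-- For multilinear `f = Σ_σ α_σ X_{σ(1)}⋯X_{σ(m)}` and the graded generic
substitution `xᵢ = Σ_j μ_{i,j} e_{j, j+qᵢ}` with `Σ qᵢ = 0`, the value
`f(x₁,…,x_m)` is diagonal with `(j,j)` entry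
`Σ_{σ kosher at j} α_σ ∏_t μ_{σ(t), j_t}`. -/
theorem multilinear_graded_eval_entries (F : Type) [Field F] (m n : ℕ)
    (hm : 1 ≤ m) (hn : 1 ≤ n) (α : Equiv.Perm (Fin m) → F)
    (f : FreeAlgebra F (Fin m))
    (hf : f = ∑ σ : Equiv.Perm (Fin m),
      α σ • (List.ofFn fun t : Fin m => FreeAlgebra.ι F (σ t)).prod)
    (q : Fin m → ℤ) (hq : ∑ i : Fin m, q i = 0)
    (x : Fin m → Matrix (Fin n) (Fin n) (MvPolynomial (Fin m × Fin n) F))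
    (hx : ∀ (i : Fin m) (j k : Fin n),
      x i j k = if (k : ℤ) = (j : ℤ) + q i then MvPolynomial.X (i, j) else 0) :
    (FreeAlgebra.lift F x f : Matrix (Fin n) (Fin n) (MvPolynomial (Fin m × Fin n) F)).IsDiag ∧
    ∀ j : Fin n,
      (FreeAlgebra.lift F x f : Matrix (Fin n) (Fin n) (MvPolynomial (Fin m × Fin n) F)) j j =
        ∑ σ ∈ Finset.univ.filter (fun σ : Equiv.Perm (Fin m) => Kosher n q σ j),
          MvPolynomial.C (α σ) * ∏ t : Fin m, muExt F m n (σ t) (Sfun n q σ j t) := by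
  obtain rfl : x = fun i => weightedShift (fun j : Fin n => (j : ℤ)) (q i)
      fun j => MvPolynomial.X (i, j) := funext fun i => Matrix.ext (hx i)
  simp only [hf, Matrix.IsDiag, Pairwise, hq, add_zero,
    multilinear_graded_eval_entries_general (fin_intCast_injective n)]
  refine ⟨fun j k hjk => if_neg ((fin_intCast_injective n).ne hjk.symm), fun j => ?_⟩
  simp only [if_true, kosher_iff_isLegalWalk, prod_muExt_eq_walkWeight, MvPolynomial.smul_eq_C_mul]
end
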